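/- arXiv:quant-ph/0509079 — 4 statements merged into one kernel-verified Lean document; each statement's English description precedes it below -/
import Mathlib

section
/- Let m, n ≥ 1. If (D₁, E₁) and (D₂, E₂) are intersection pairs of subspaces of M_{m×n}(ℂ), then (D₁ + D₂, E₁ + E₂) is also an intersection pair. In particular, if A₁, A₂ ∈ 𝕋 satisfy Range A_i = D̃_i and Range A_i^τ = Ẽ_i for i = 1, 2, then A₁ + A₂ ∈ 𝕋, Range(A₁ + A₂) = (D₁ + D₂)~ and Range(A₁ + A₂)^τ = (E₁ + E₂)~. -/
open Matrix
open scoped ComplexOrder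

/-- The partial (block) transpose of `A ∈ M_n ⊗ M_m`:  if `A = ∑ a_{ij} ⊗ e_{ij}`
(i.e. `A (r,i) (s,j) = (a_{ij}) r s`) then `A^τ = ∑ a_{ji} ⊗ e_{ij}`. -/
def partialTranspose {m n : ℕ} (A : Matrix (Fin n × Fin m) (Fin n × Fin m) ℂ) :
    Matrix (Fin n × Fin m) (Fin n × Fin m) ℂ :=
  Matrix.of fun p q => A (p.1, q.2) (q.1, p.2)

/-- The vectorization `z ↦ z̃ ∈ ℂ^n ⊗ ℂ^m` as a linear map; the component of `z̃` at
the index `(k, i)` is `z i k`. -/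
def vecL (m n : ℕ) : Matrix (Fin m) (Fin n) ℂ →ₗ[ℂ] (Fin n × Fin m → ℂ) where
  toFun z := fun p => z p.2 p.1
  map_add' _ _ := rfl
  map_smul' _ _ := rfl

/-- The cone `𝕋` of matrices of positive partial transpose (PPT matrices). -/
def pptCone (m n : ℕ) : Set (Matrix (Fin n × Fin m) (Fin n × Fin m) ℂ) :=
  {A | A.PosSemidef ∧ (partialTranspose A).PosSemidef}

/-- `Ψ_D`: positive semidefinite matrices with range contained in `D̃`. -/
def PsiD {m n : ℕ} (D : Submodule ℂ (Matrix (Fin m) (Fin n) ℂ)) :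
    Set (Matrix (Fin n × Fin m) (Fin n × Fin m) ℂ) :=
  {A | A.PosSemidef ∧ LinearMap.range A.mulVecLin ≤ D.map (vecL m n)}

/-- `Ψ^E`: matrices whose partial transpose lies in `Ψ_E`. -/
def PsiE {m n : ℕ} (E : Submodule ℂ (Matrix (Fin m) (Fin n) ℂ)) :
    Set (Matrix (Fin n × Fin m) (Fin n × Fin m) ℂ) :=
  {A | partialTranspose A ∈ PsiD E}

/-- `τ(D,E) = Ψ_D ∩ Ψ^E`. -/
def tauSet {m n : ℕ} (D E : Submodule ℂ (Matrix (Fin m) (Fin n) ℂ)) :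
    Set (Matrix (Fin n × Fin m) (Fin n × Fin m) ℂ) :=
  PsiD D ∩ PsiE E

/-- `(D, E)` is an intersection pair: `τ(D,E)` is nonempty and its relative interior is
contained in the relative interiors of both `Ψ_D` and `Ψ^E`. -/
def IsIntersectionPair {m n : ℕ} (D E : Submodule ℂ (Matrix (Fin m) (Fin n) ℂ)) : Prop :=
  (tauSet D E).Nonempty ∧
    intrinsicInterior ℝ (tauSet D E) ⊆ intrinsicInterior ℝ (PsiD D) ∧
    intrinsicInterior ℝ (tauSet D E) ⊆ intrinsicInterior ℝ (PsiE E)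


open Topology Filter

section General
variable {V : Type*} [AddCommGroup V] [Module ℝ V] [TopologicalSpace V]

theorem mem_ri_iff_aux (C : Set V) (x : V) :
    x ∈ intrinsicInterior ℝ C ↔
      x ∈ C ∧ ∀ᶠ u in 𝓝[(affineSpan ℝ C : Set V)] x, u ∈ C := by
  rw [mem_intrinsicInterior]
  constructor
  · rintro ⟨y, hy, rfl⟩
    refine ⟨(interior_subset hy : y ∈ (Subtype.val ⁻¹' C : Set (affineSpan ℝ C))), ?_⟩
    have := mem_interior_iff_mem_nhds.1 hy
    exact (eventually_nhds_subtype_iff (affineSpan ℝ C : Set V) y (fun u => u ∈ C)).1 this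
  · rintro ⟨hx, h⟩
    refine ⟨⟨x, subset_affineSpan ℝ C hx⟩, ?_, rfl⟩
    rw [mem_interior_iff_mem_nhds]
    exact (eventually_nhds_subtype_iff (affineSpan ℝ C : Set V)
      ⟨x, subset_affineSpan ℝ C hx⟩ (fun u => u ∈ C)).2 h

variable [IsTopologicalAddGroup V] [ContinuousSMul ℝ V]

theorem mem_ri_iff (C : Set V) (hadd : ∀ x ∈ C, ∀ y ∈ C, x + y ∈ C)
    (hsmul : ∀ c : ℝ, 0 ≤ c → ∀ x ∈ C, c • x ∈ C)
    (hne : (intrinsicInterior ℝ C).Nonempty) (x : V) :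
    x ∈ intrinsicInterior ℝ C ↔ x ∈ C ∧ ∀ y ∈ C, ∃ ε : ℝ, 0 < ε ∧ x - ε • y ∈ C := by
  constructor
  · intro h
    rw [mem_ri_iff_aux] at h
    obtain ⟨hx, h⟩ := h
    refine ⟨hx, fun y hy => ?_⟩
    have hc : Tendsto (fun t : ℝ => AffineMap.lineMap x y (-t)) (𝓝[>] (0:ℝ))
        (𝓝[(affineSpan ℝ C : Set V)] x) := by
      apply tendsto_nhdsWithin_iff.2
      constructor
      · have : Continuous (fun t : ℝ => (-t) • (y - x) + x) := by fun_prop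
        have h2 := this.tendsto 0
        simp only [neg_zero, zero_smul, zero_add] at h2
        simpa [AffineMap.lineMap_apply] using h2.mono_left nhdsWithin_le_nhds
      · exact Eventually.of_forall fun t => AffineMap.lineMap_mem _
          (subset_affineSpan ℝ C hx) (subset_affineSpan ℝ C hy)
    obtain ⟨t, ht, ht0⟩ := ((hc.eventually h).and self_mem_nhdsWithin).exists
    have ht0 : 0 < t := ht0
    have h1 : (1 + t) ≠ 0 := by positivity
    refine ⟨t / (1 + t), by positivity, ?_⟩
    have := hsmul (1 + t)⁻¹ (by positivity) _ ht
    convert this using 1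
    simp only [AffineMap.lineMap_apply, vsub_eq_sub, vadd_eq_add]
    match_scalars <;> field_simp <;> ring
  · rintro ⟨hx, h⟩
    obtain ⟨z, hz⟩ := hne
    rw [mem_ri_iff_aux] at hz ⊢
    obtain ⟨hzC, hz⟩ := hz
    obtain ⟨ε, hε, hw⟩ := h z hzC
    refine ⟨hx, ?_⟩
    have h0 : (0 : V) ∈ C := by simpa using hsmul 0 le_rfl x hx
    have hspan : (affineSpan ℝ C : Set V) = Submodule.span ℝ C := by
      rw [← affineSpan_insert_zero, Set.insert_eq_of_mem h0]
    have hc : Tendsto (fun u : V => ε⁻¹ • (u - (x - ε • z))) (𝓝[(affineSpan ℝ C : Set V)] x)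
        (𝓝[(affineSpan ℝ C : Set V)] z) := by
      apply tendsto_nhdsWithin_iff.2
      constructor
      · have : Continuous (fun u : V => ε⁻¹ • (u - (x - ε • z))) := by fun_prop
        have h2 := this.tendsto x
        simp only [sub_sub_cancel, inv_smul_smul₀ hε.ne'] at h2
        exact h2.mono_left nhdsWithin_le_nhds
      · filter_upwards [self_mem_nhdsWithin] with u hu
        rw [hspan] at hu ⊢
        exact Submodule.smul_mem _ _ (Submodule.sub_mem _ hu (Submodule.subset_span hw))
    filter_upwards [hc.eventually hz] with u hu
    have := hadd _ (hsmul ε hε.le _ hu) _ hw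
    rwa [smul_inv_smul₀ hε.ne', sub_add_cancel] at this

end General

section Mat
open scoped MatrixOrder Matrix.Norms.L2Operator

theorem psd_factor {k : Type*} [Fintype k] [DecidableEq k] {A : Matrix k k ℂ} (hA : A.PosSemidef) :
    ∃ T : Matrix k k ℂ, A = Tᴴ * T := by
  obtain ⟨T, hT⟩ := CStarAlgebra.nonneg_iff_eq_star_mul_self.1 (Matrix.nonneg_iff_posSemidef.2 hA)
  exact ⟨T, hT⟩

theorem psd_bound {k : Type*} [Fintype k] [DecidableEq k] (X : Matrix k k ℂ) :
    ∃ K : ℝ, 0 < K ∧ (K • (1 : Matrix k k ℂ) - X * Xᴴ).PosSemidef := by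
  have h : X * Xᴴ ≤ algebraMap ℝ (Matrix k k ℂ) ‖X * Xᴴ‖ :=
    IsSelfAdjoint.le_algebraMap_norm_self (a := X * Xᴴ) (IsSelfAdjoint.mul_star_self X)
  rw [Matrix.le_iff, Algebra.algebraMap_eq_smul_one] at h
  refine ⟨‖X * Xᴴ‖ + 1, by positivity, ?_⟩
  have h2 := h.add (Matrix.PosSemidef.one (n := k) (R := ℂ))
  have h3 : (‖X * Xᴴ‖ + 1) • (1 : Matrix k k ℂ) - X * Xᴴ =
      ‖X * Xᴴ‖ • (1 : Matrix k k ℂ) - X * Xᴴ + 1 := by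
    rw [add_smul, one_smul]
    abel
  rw [h3]
  exact h2

end Mat

theorem range_ct_mul {k l : Type*} [Fintype k] [Fintype l] [DecidableEq k] [DecidableEq l]
    (T : Matrix l k ℂ) :
    LinearMap.range (Tᴴ * T).mulVecLin = LinearMap.range (Tᴴ).mulVecLin := by
  apply Submodule.eq_of_le_of_finrank_eq
  · rw [Matrix.mulVecLin_mul]
    exact LinearMap.range_comp_le_range _ _
  · change (Tᴴ * T).rank = (Tᴴ).rank
    rw [Matrix.rank_conjTranspose_mul_self, Matrix.rank_conjTranspose]

theorem range_le_add {k : Type*} [Fintype k] [DecidableEq k] {A B : Matrix k k ℂ}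
    (hA : A.PosSemidef) (hB : B.PosSemidef) :
    LinearMap.range A.mulVecLin ≤ LinearMap.range (A + B).mulVecLin := by
  obtain ⟨T, rfl⟩ := psd_factor hA
  obtain ⟨R, rfl⟩ := psd_factor hB
  have h : Tᴴ * T + Rᴴ * R = (Matrix.fromRows T R)ᴴ * Matrix.fromRows T R := by
    rw [Matrix.conjTranspose_fromRows_eq_fromCols_conjTranspose, Matrix.fromCols_mul_fromRows]
  rw [h, range_ct_mul, range_ct_mul]
  rintro _ ⟨v, rfl⟩
  refine ⟨Sum.elim v 0, ?_⟩
  simp [Matrix.conjTranspose_fromRows_eq_fromCols_conjTranspose, Matrix.fromCols_mulVec]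

theorem range_smul_eq {k : Type*} [Fintype k] {A : Matrix k k ℂ} {c : ℝ} (hc : c ≠ 0) :
    LinearMap.range (c • A).mulVecLin = LinearMap.range A.mulVecLin := by
  have : (c • A).mulVecLin = (c : ℂ) • A.mulVecLin := by
    ext v i; simp [Matrix.smul_mulVec]
  rw [this, LinearMap.range_smul _ _ (by exact_mod_cast hc)]

theorem range_add_le' {k : Type*} [Fintype k] (A B : Matrix k k ℂ) :
    LinearMap.range (A + B).mulVecLin ≤
      LinearMap.range A.mulVecLin ⊔ LinearMap.range B.mulVecLin := by
  rw [Matrix.mulVecLin_add]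
  exact LinearMap.range_add_le _ _

theorem range_add_eq {k : Type*} [Fintype k] [DecidableEq k] {A B : Matrix k k ℂ}
    (hA : A.PosSemidef) (hB : B.PosSemidef) :
    LinearMap.range (A + B).mulVecLin =
      LinearMap.range A.mulVecLin ⊔ LinearMap.range B.mulVecLin := by
  refine le_antisymm (range_add_le' A B) (sup_le (range_le_add hA hB) ?_)
  rw [add_comm]
  exact range_le_add hB hA

theorem psd_smul {k : Type*} [Fintype k] {A : Matrix k k ℂ} (hA : A.PosSemidef) {c : ℝ}
    (hc : 0 ≤ c) : (c • A).PosSemidef := hA.smul hc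

theorem psd_range_le {k : Type*} [Fintype k] [DecidableEq k] {A B : Matrix k k ℂ}
    (hA : A.PosSemidef) (hB : B.PosSemidef)
    (h : LinearMap.range B.mulVecLin ≤ LinearMap.range A.mulVecLin) :
    ∃ ε : ℝ, 0 < ε ∧ (A - ε • B).PosSemidef := by
  obtain ⟨S, rfl⟩ := psd_factor hA
  obtain ⟨T, rfl⟩ := psd_factor hB
  rw [range_ct_mul, range_ct_mul] at h
  have hx : ∀ j, ∃ x : k → ℂ, Sᴴ *ᵥ x = Tᴴ *ᵥ (Pi.single j 1) := fun j => h ⟨_, rfl⟩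
  choose x hx using hx
  have hX : Tᴴ = Sᴴ * (Matrix.of x)ᵀ := by
    ext i j
    have := congrFun (hx j) i
    rw [Matrix.mulVec_single_one] at this
    exact this.symm
  set X := (Matrix.of x)ᵀ
  obtain ⟨K, hK, hb⟩ := psd_bound X
  refine ⟨K⁻¹, by positivity, ?_⟩
  have h2 := psd_smul (hb.conjTranspose_mul_mul_same S) (inv_nonneg.2 hK.le)
  convert h2 using 1
  have hT : T = Xᴴ * S := by
    rw [← Matrix.conjTranspose_conjTranspose T, hX]; simp
  rw [hX, hT, Matrix.mul_sub, Matrix.sub_mul, smul_sub]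
  simp [Matrix.mul_assoc, smul_smul, hK.ne']

section Main
variable {m n : ℕ}

theorem pt_add (A B : Matrix (Fin n × Fin m) (Fin n × Fin m) ℂ) :
    partialTranspose (A + B) = partialTranspose A + partialTranspose B := rfl

theorem pt_sub (A B : Matrix (Fin n × Fin m) (Fin n × Fin m) ℂ) :
    partialTranspose (A - B) = partialTranspose A - partialTranspose B := rfl

theorem pt_smul (c : ℝ) (A : Matrix (Fin n × Fin m) (Fin n × Fin m) ℂ) :
    partialTranspose (c • A) = c • partialTranspose A := rfl

theorem pt_pt (A : Matrix (Fin n × Fin m) (Fin n × Fin m) ℂ) :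
    partialTranspose (partialTranspose A) = A := rfl

theorem psiD_add (D : Submodule ℂ (Matrix (Fin m) (Fin n) ℂ)) :
    ∀ x ∈ PsiD D, ∀ y ∈ PsiD D, x + y ∈ PsiD D := fun x hx y hy =>
  ⟨hx.1.add hy.1, (range_add_le' x y).trans (sup_le hx.2 hy.2)⟩

theorem psiD_smul (D : Submodule ℂ (Matrix (Fin m) (Fin n) ℂ)) :
    ∀ c : ℝ, 0 ≤ c → ∀ x ∈ PsiD D, c • x ∈ PsiD D := by
  intro c hc x hx
  refine ⟨psd_smul hx.1 hc, ?_⟩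
  rcases eq_or_ne c 0 with rfl | h
  · simp
  · rw [range_smul_eq h]; exact hx.2

theorem psiE_add (D : Submodule ℂ (Matrix (Fin m) (Fin n) ℂ)) :
    ∀ x ∈ PsiE D, ∀ y ∈ PsiE D, x + y ∈ PsiE D := fun _ hx _ hy => psiD_add D _ hx _ hy

theorem psiE_smul (D : Submodule ℂ (Matrix (Fin m) (Fin n) ℂ)) :
    ∀ c : ℝ, 0 ≤ c → ∀ x ∈ PsiE D, c • x ∈ PsiE D := fun c hc _ hx => psiD_smul D c hc _ hx

theorem tau_add (D E : Submodule ℂ (Matrix (Fin m) (Fin n) ℂ)) :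
    ∀ x ∈ tauSet D E, ∀ y ∈ tauSet D E, x + y ∈ tauSet D E := fun _ hx _ hy =>
  ⟨psiD_add D _ hx.1 _ hy.1, psiE_add E _ hx.2 _ hy.2⟩

theorem tau_smul (D E : Submodule ℂ (Matrix (Fin m) (Fin n) ℂ)) :
    ∀ c : ℝ, 0 ≤ c → ∀ x ∈ tauSet D E, c • x ∈ tauSet D E := fun c hc _ hx =>
  ⟨psiD_smul D c hc _ hx.1, psiE_smul E c hc _ hx.2⟩

attribute [local instance] Matrix.normedAddCommGroup Matrix.normedSpace in
theorem ri_nonempty (C : Set (Matrix (Fin n × Fin m) (Fin n × Fin m) ℂ))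
    (hadd : ∀ x ∈ C, ∀ y ∈ C, x + y ∈ C)
    (hsmul : ∀ c : ℝ, 0 ≤ c → ∀ x ∈ C, c • x ∈ C) (hne : C.Nonempty) :
    (intrinsicInterior ℝ C).Nonempty := by
  have hc : Convex ℝ C := fun x hx y hy a b ha hb _ =>
    hadd _ (hsmul a ha x hx) _ (hsmul b hb y hy)
  exact Set.Nonempty.intrinsicInterior hc hne

theorem mat_ri_iff (C : Set (Matrix (Fin n × Fin m) (Fin n × Fin m) ℂ))
    (hadd : ∀ x ∈ C, ∀ y ∈ C, x + y ∈ C)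
    (hsmul : ∀ c : ℝ, 0 ≤ c → ∀ x ∈ C, c • x ∈ C)
    (x : Matrix (Fin n × Fin m) (Fin n × Fin m) ℂ) :
    x ∈ intrinsicInterior ℝ C ↔ x ∈ C ∧ ∀ y ∈ C, ∃ ε : ℝ, 0 < ε ∧ x - ε • y ∈ C := by
  rcases C.eq_empty_or_nonempty with rfl | hne
  · simp
  · exact mem_ri_iff C hadd hsmul (ri_nonempty C hadd hsmul hne) x

theorem ri_psiD (D : Submodule ℂ (Matrix (Fin m) (Fin n) ℂ))
    (A : Matrix (Fin n × Fin m) (Fin n × Fin m) ℂ) :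
    A ∈ intrinsicInterior ℝ (PsiD D) ↔
      A.PosSemidef ∧ LinearMap.range A.mulVecLin = D.map (vecL m n) := by
  rw [mat_ri_iff _ (psiD_add D) (psiD_smul D)]
  constructor
  · rintro ⟨hA, h⟩
    refine ⟨hA.1, le_antisymm hA.2 fun v hv => ?_⟩
    have hB : Matrix.vecMulVec v (star v) ∈ PsiD D := by
      refine ⟨Matrix.posSemidef_vecMulVec_self_star v, ?_⟩
      rintro _ ⟨w, rfl⟩
      rw [Matrix.mulVecLin_apply, Matrix.vecMulVec_mulVec, op_smul_eq_smul]
      exact Submodule.smul_mem _ (star v ⬝ᵥ w) hv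
    obtain ⟨ε, hε, hd⟩ := h _ hB
    have h1 := range_le_add (psd_smul hB.1 hε.le) hd.1
    rw [add_sub_cancel, range_smul_eq hε.ne'] at h1
    rcases eq_or_ne v 0 with rfl | hv0
    · exact Submodule.zero_mem _
    apply h1
    have hn : star v ⬝ᵥ v ≠ 0 := by
      simpa using hv0
    refine ⟨(star v ⬝ᵥ v)⁻¹ • v, ?_⟩
    rw [map_smul, Matrix.mulVecLin_apply, Matrix.vecMulVec_mulVec, op_smul_eq_smul]
    ext i
    simp
    field_simp
  · rintro ⟨hA, h⟩
    refine ⟨⟨hA, h.le⟩, fun B hB => ?_⟩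
    obtain ⟨ε, hε, hp⟩ := psd_range_le hA hB.1 (hB.2.trans h.ge)
    refine ⟨ε, hε, hp, ?_⟩
    have := range_le_add hp (psd_smul hB.1 hε.le)
    rw [sub_add_cancel] at this
    exact this.trans h.le

theorem ri_psiE (E : Submodule ℂ (Matrix (Fin m) (Fin n) ℂ))
    (A : Matrix (Fin n × Fin m) (Fin n × Fin m) ℂ) :
    A ∈ intrinsicInterior ℝ (PsiE E) ↔
      partialTranspose A ∈ intrinsicInterior ℝ (PsiD E) := by
  rw [mat_ri_iff _ (psiD_add E) (psiD_smul E), mat_ri_iff _ (psiE_add E) (psiE_smul E)]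
  exact and_congr Iff.rfl ⟨fun h y hy => h (partialTranspose y) hy, fun h y hy => h _ hy⟩

/-- A single relative interior witness makes an intersection pair. -/
theorem pair_of_witness (D E : Submodule ℂ (Matrix (Fin m) (Fin n) ℂ))
    (A : Matrix (Fin n × Fin m) (Fin n × Fin m) ℂ)
    (hD : A ∈ intrinsicInterior ℝ (PsiD D)) (hE : A ∈ intrinsicInterior ℝ (PsiE E)) :
    IsIntersectionPair D E := by
  have hA : A ∈ tauSet D E := ⟨intrinsicInterior_subset hD, intrinsicInterior_subset hE⟩
  have key : ∀ C : Set (Matrix (Fin n × Fin m) (Fin n × Fin m) ℂ),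
      (∀ x ∈ C, ∀ y ∈ C, x + y ∈ C) → (∀ c : ℝ, 0 ≤ c → ∀ x ∈ C, c • x ∈ C) →
      tauSet D E ⊆ C → A ∈ intrinsicInterior ℝ C →
      intrinsicInterior ℝ (tauSet D E) ⊆ intrinsicInterior ℝ C := by
    intro C hadd hsmul hsub hAC y hy
    rw [mat_ri_iff _ (tau_add D E) (tau_smul D E)] at hy
    rw [mat_ri_iff _ hadd hsmul] at hAC ⊢
    refine ⟨hsub hy.1, fun z hz => ?_⟩
    obtain ⟨ε, hε, hw⟩ := hy.2 A hA
    obtain ⟨δ, hδ, hv⟩ := hAC.2 z hz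
    refine ⟨ε * δ, by positivity, ?_⟩
    convert hadd _ (hsub hw) _ (hsmul ε hε.le _ hv) using 1
    module
  exact ⟨⟨A, hA⟩, key _ (psiD_add D) (psiD_smul D) (fun _ h => h.1) hD,
    key _ (psiE_add E) (psiE_smul E) (fun _ h => h.2) hE⟩

end Main

/-- If `(D₁,E₁)` and `(D₂,E₂)` are intersection pairs then so is `(D₁+D₂, E₁+E₂)`; in
particular, sums of witnessing PPT matrices witness the sum pair. -/
theorem intersectionPair_sup (m n : ℕ) (hm : 1 ≤ m) (hn : 1 ≤ n)
    (D₁ E₁ D₂ E₂ : Submodule ℂ (Matrix (Fin m) (Fin n) ℂ))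
    (h₁ : IsIntersectionPair D₁ E₁) (h₂ : IsIntersectionPair D₂ E₂) :
    IsIntersectionPair (D₁ ⊔ D₂) (E₁ ⊔ E₂) ∧
    ∀ A₁ A₂ : Matrix (Fin n × Fin m) (Fin n × Fin m) ℂ,
      A₁ ∈ pptCone m n → A₂ ∈ pptCone m n →
      LinearMap.range A₁.mulVecLin = D₁.map (vecL m n) →
      LinearMap.range (partialTranspose A₁).mulVecLin = E₁.map (vecL m n) →
      LinearMap.range A₂.mulVecLin = D₂.map (vecL m n) →
      LinearMap.range (partialTranspose A₂).mulVecLin = E₂.map (vecL m n) →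
      A₁ + A₂ ∈ pptCone m n ∧
      LinearMap.range (A₁ + A₂).mulVecLin = (D₁ ⊔ D₂).map (vecL m n) ∧
      LinearMap.range (partialTranspose (A₁ + A₂)).mulVecLin = (E₁ ⊔ E₂).map (vecL m n) := by
  have main : ∀ A₁ A₂ : Matrix (Fin n × Fin m) (Fin n × Fin m) ℂ,
      A₁ ∈ pptCone m n → A₂ ∈ pptCone m n →
      LinearMap.range A₁.mulVecLin = D₁.map (vecL m n) →
      LinearMap.range (partialTranspose A₁).mulVecLin = E₁.map (vecL m n) →
      LinearMap.range A₂.mulVecLin = D₂.map (vecL m n) →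
      LinearMap.range (partialTranspose A₂).mulVecLin = E₂.map (vecL m n) →
      A₁ + A₂ ∈ pptCone m n ∧
      LinearMap.range (A₁ + A₂).mulVecLin = (D₁ ⊔ D₂).map (vecL m n) ∧
      LinearMap.range (partialTranspose (A₁ + A₂)).mulVecLin = (E₁ ⊔ E₂).map (vecL m n) := by
    intro A₁ A₂ hA₁ hA₂ hd₁ he₁ hd₂ he₂
    refine ⟨⟨hA₁.1.add hA₂.1, ?_⟩, ?_, ?_⟩
    · rw [pt_add]
      exact hA₁.2.add hA₂.2
    · rw [range_add_eq hA₁.1 hA₂.1, hd₁, hd₂, Submodule.map_sup]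
    · rw [pt_add, range_add_eq hA₁.2 hA₂.2, he₁, he₂, Submodule.map_sup]
  refine ⟨?_, main⟩
  obtain ⟨A₁, hA₁⟩ := ri_nonempty _ (tau_add D₁ E₁) (tau_smul D₁ E₁) h₁.1
  obtain ⟨A₂, hA₂⟩ := ri_nonempty _ (tau_add D₂ E₂) (tau_smul D₂ E₂) h₂.1
  have d₁ := (ri_psiD D₁ A₁).1 (h₁.2.1 hA₁)
  have d₂ := (ri_psiD D₂ A₂).1 (h₂.2.1 hA₂)
  have e₁ := (ri_psiD E₁ _).1 ((ri_psiE E₁ A₁).1 (h₁.2.2 hA₁))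
  have e₂ := (ri_psiD E₂ _).1 ((ri_psiE E₂ A₂).1 (h₂.2.2 hA₂))
  obtain ⟨hp, hd, he⟩ := main A₁ A₂ ⟨d₁.1, e₁.1⟩ ⟨d₂.1, e₂.1⟩ d₁.2 e₁.2 d₂.2 e₂.2
  exact pair_of_witness _ _ (A₁ + A₂) ((ri_psiD _ _).2 ⟨hp.1, hd⟩)
    ((ri_psiE _ _).2 ((ri_psiD _ _).2 ⟨hp.2, he⟩))
end

section
/- Let λ > 0, λ ≠ 1, μ = 1/λ, and in ℂ³ take ξ = e₁, η = e₂, ζ = (e₁ + e₂)/√2. Let X be the 9×9 matrix with nonzero entries X₁₁ = X₅₅ = X₉₉ = X₁₅ = X₅₁ = X₁₉ = X₉₁ = X₅₉ = X₉₅ = 1; X₂₂ = X₆₆ = X₇₇ = λ²; X₃₃ = X₄₄ = X₈₈ = μ²; X₃₇ = X₇₃ = 1/√2; X₆₈ = X₈₆ = 1/√2 (all other entries 0). Then X and its partial transpose X^τ are positive semidefinite, rank X = 7, and rank X^τ = 5. -/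
open Matrix Complex
open scoped ComplexOrder

/-- The partial transpose of a `9 × 9` matrix viewed as a `3 × 3` array of `3 × 3`
blocks `B_{ij}`: the `(i,j)` block of `pt9 X` is `B_{ji}`. -/
def pt9 (X : Matrix (Fin 9) (Fin 9) ℂ) : Matrix (Fin 9) (Fin 9) ℂ :=
  Matrix.of fun i j =>
    X ⟨3 * ((j : ℕ) / 3) + (i : ℕ) % 3, by have := j.isLt; omega⟩
      ⟨3 * ((i : ℕ) / 3) + (j : ℕ) % 3, by have := i.isLt; omega⟩

/-- The matrix `X(e₁, e₂, (e₁+e₂)/√2; λ)` (with `μ = 1/λ`): here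
`⟨ζ,ξ⟩ = ⟨ξ,ζ⟩ = ⟨ζ,η⟩ = ⟨η,ζ⟩ = 1/√2`. -/
noncomputable def X11 (lam mu : ℝ) : Matrix (Fin 9) (Fin 9) ℂ :=
  !![1, 0, 0, 0, 1, 0, 0, 0, 1;
     0, (lam : ℂ)^2, 0, 0, 0, 0, 0, 0, 0;
     0, 0, (mu : ℂ)^2, 0, 0, 0, ((1 / Real.sqrt 2 : ℝ) : ℂ), 0, 0;
     0, 0, 0, (mu : ℂ)^2, 0, 0, 0, 0, 0;
     1, 0, 0, 0, 1, 0, 0, 0, 1;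
     0, 0, 0, 0, 0, (lam : ℂ)^2, 0, ((1 / Real.sqrt 2 : ℝ) : ℂ), 0;
     0, 0, ((1 / Real.sqrt 2 : ℝ) : ℂ), 0, 0, 0, (lam : ℂ)^2, 0, 0;
     0, 0, 0, 0, 0, ((1 / Real.sqrt 2 : ℝ) : ℂ), 0, (mu : ℂ)^2, 0;
     1, 0, 0, 0, 1, 0, 0, 0, 1]

/-- A factorization `X = Aᴴ A` with `A` right invertible gives positivity and the rank. -/
theorem psd_rank_of_factor {k : ℕ} (X : Matrix (Fin 9) (Fin 9) ℂ)
    (A : Matrix (Fin k) (Fin 9) ℂ) (B : Matrix (Fin 9) (Fin k) ℂ)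
    (hX : X = Aᴴ * A) (hAB : A * B = 1) : X.PosSemidef ∧ X.rank = k := by
  subst hX
  refine ⟨Matrix.posSemidef_conjTranspose_mul_self A, ?_⟩
  rw [Matrix.rank_conjTranspose_mul_self]
  apply le_antisymm
  · exact Matrix.rank_le_height A
  · have h := Matrix.rank_mul_le_left A B
    rw [hAB, Matrix.rank_one, Fintype.card_fin] at h
    exact h

/-- The factor of `X`. -/
noncomputable def facA (l m s : ℝ) : Matrix (Fin 7) (Fin 9) ℂ :=
  !![1, 0, 0, 0, 1, 0, 0, 0, 1;
     0, (l : ℂ), 0, 0, 0, 0, 0, 0, 0;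
     0, 0, 0, (m : ℂ), 0, 0, 0, 0, 0;
     0, 0, (m : ℂ), 0, 0, 0, (s : ℂ) * l, 0, 0;
     0, 0, 0, 0, 0, 0, (s : ℂ) * l, 0, 0;
     0, 0, 0, 0, 0, (l : ℂ), 0, (s : ℂ) * m, 0;
     0, 0, 0, 0, 0, 0, 0, (s : ℂ) * m, 0]

/-- A right inverse of `facA`. -/
noncomputable def invA (l m s : ℝ) : Matrix (Fin 9) (Fin 7) ℂ :=
  !![1, 0, 0, 0, 0, 0, 0;
     0, (m : ℂ), 0, 0, 0, 0, 0;
     0, 0, 0, (l : ℂ), -(l : ℂ), 0, 0;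
     0, 0, (l : ℂ), 0, 0, 0, 0;
     0, 0, 0, 0, 0, 0, 0;
     0, 0, 0, 0, 0, (m : ℂ), -(m : ℂ);
     0, 0, 0, 0, 2 * (s : ℂ) * m, 0, 0;
     0, 0, 0, 0, 0, 0, 2 * (s : ℂ) * l;
     0, 0, 0, 0, 0, 0, 0]

/-- The factor of the partial transpose. -/
noncomputable def facT (l m s : ℝ) : Matrix (Fin 5) (Fin 9) ℂ :=
  !![0, (l : ℂ), 0, (m : ℂ), 0, 0, 0, 0, 0;
     0, 0, (m : ℂ), 0, 0, 0, (l : ℂ), 0, 0;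
     0, 0, 0, 0, 0, (l : ℂ), 0, (m : ℂ), 0;
     1, 0, 0, 0, 0, 0, 0, 0, (s : ℂ);
     0, 0, 0, 0, 1, 0, 0, 0, (s : ℂ)]

/-- A right inverse of `facT`. -/
noncomputable def invT (l m : ℝ) : Matrix (Fin 9) (Fin 5) ℂ :=
  !![0, 0, 0, 1, 0;
     (m : ℂ), 0, 0, 0, 0;
     0, (l : ℂ), 0, 0, 0;
     0, 0, 0, 0, 0;
     0, 0, 0, 0, 1;
     0, 0, (m : ℂ), 0, 0;
     0, 0, 0, 0, 0;
     0, 0, 0, 0, 0;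
     0, 0, 0, 0, 0]

/-- The partial transpose, written out. -/
noncomputable def X11T (lam mu : ℝ) : Matrix (Fin 9) (Fin 9) ℂ :=
  !![1, 0, 0, 0, 0, 0, 0, 0, ((1 / Real.sqrt 2 : ℝ) : ℂ);
     0, (lam : ℂ)^2, 0, 1, 0, 0, 0, 0, 0;
     0, 0, (mu : ℂ)^2, 0, 0, 0, 1, 0, 0;
     0, 1, 0, (mu : ℂ)^2, 0, 0, 0, 0, 0;
     0, 0, 0, 0, 1, 0, 0, 0, ((1 / Real.sqrt 2 : ℝ) : ℂ);
     0, 0, 0, 0, 0, (lam : ℂ)^2, 0, 1, 0;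
     0, 0, 1, 0, 0, 0, (lam : ℂ)^2, 0, 0;
     0, 0, 0, 0, 0, 1, 0, (mu : ℂ)^2, 0;
     ((1 / Real.sqrt 2 : ℝ) : ℂ), 0, 0, 0, ((1 / Real.sqrt 2 : ℝ) : ℂ), 0, 0, 0, 1]

/-- The partial transpose of a general matrix, entry by entry. -/
theorem pt9_explicit (Y : Matrix (Fin 9) (Fin 9) ℂ) : pt9 Y =
  !![Y 0 0, Y 0 1, Y 0 2, Y 3 0, Y 3 1, Y 3 2, Y 6 0, Y 6 1, Y 6 2;
     Y 1 0, Y 1 1, Y 1 2, Y 4 0, Y 4 1, Y 4 2, Y 7 0, Y 7 1, Y 7 2;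
     Y 2 0, Y 2 1, Y 2 2, Y 5 0, Y 5 1, Y 5 2, Y 8 0, Y 8 1, Y 8 2;
     Y 0 3, Y 0 4, Y 0 5, Y 3 3, Y 3 4, Y 3 5, Y 6 3, Y 6 4, Y 6 5;
     Y 1 3, Y 1 4, Y 1 5, Y 4 3, Y 4 4, Y 4 5, Y 7 3, Y 7 4, Y 7 5;
     Y 2 3, Y 2 4, Y 2 5, Y 5 3, Y 5 4, Y 5 5, Y 8 3, Y 8 4, Y 8 5;
     Y 0 6, Y 0 7, Y 0 8, Y 3 6, Y 3 7, Y 3 8, Y 6 6, Y 6 7, Y 6 8;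
     Y 1 6, Y 1 7, Y 1 8, Y 4 6, Y 4 7, Y 4 8, Y 7 6, Y 7 7, Y 7 8;
     Y 2 6, Y 2 7, Y 2 8, Y 5 6, Y 5 7, Y 5 8, Y 8 6, Y 8 7, Y 8 8] := by
  ext i j
  fin_cases i <;> fin_cases j <;> rfl

theorem pt9_X11 (lam mu : ℝ) : pt9 (X11 lam mu) = X11T lam mu := by
  rw [pt9_explicit]
  simp [X11, X11T]

set_option maxHeartbeats 4000000 in
/-- With `ξ = e₁, η = e₂, ζ = (e₁+e₂)/√2`: `X` is PPT with `rank X = 7` and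
`rank X^τ = 5` (a `(7,5)` edge state). -/
theorem X11_ppt_rank (lam mu : ℝ) (h0 : 0 < lam) (h1 : lam ≠ 1) (hmu : mu = 1 / lam) :
    (X11 lam mu).PosSemidef ∧ (pt9 (X11 lam mu)).PosSemidef ∧
      (X11 lam mu).rank = 7 ∧ (pt9 (X11 lam mu)).rank = 5 := by
  have hlm' : lam * mu = 1 := by rw [hmu]; field_simp
  have hs' : (1 / Real.sqrt 2) * (1 / Real.sqrt 2) = 1 / 2 := by
    rw [div_mul_div_comm, Real.mul_self_sqrt (by norm_num)]; norm_num
  have hlm : (lam : ℂ) * mu = 1 := by exact_mod_cast hlm'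
  obtain ⟨s, hsd⟩ : ∃ s : ℝ, s = 1 / Real.sqrt 2 := ⟨_, rfl⟩
  have hs : (s : ℂ) * s = 1 / 2 := by
    rw [← hsd] at hs'
    have := congrArg (fun x : ℝ => (x : ℂ)) hs'
    push_cast at this
    exact this
  have e1 : X11 lam mu = (facA lam mu s)ᴴ * facA lam mu s := by
    unfold X11 facA
    rw [← hsd]
    ext i j
    fin_cases i <;> fin_cases j <;> simp [Matrix.mul_apply, Fin.sum_univ_succ] <;> grind
  have e2 : facA lam mu s * invA lam mu s = 1 := by
    unfold facA invA
    ext i j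
    fin_cases i <;> fin_cases j <;>
      simp [Matrix.mul_apply, Fin.sum_univ_succ] <;> grind
  have e3 : pt9 (X11 lam mu) = (facT lam mu s)ᴴ * facT lam mu s := by
    rw [pt9_X11]
    unfold X11T facT
    rw [← hsd]
    ext i j
    fin_cases i <;> fin_cases j <;> simp [Matrix.mul_apply, Fin.sum_univ_succ] <;> grind
  have e4 : facT lam mu s * invT lam mu = 1 := by
    unfold facT invT
    ext i j
    fin_cases i <;> fin_cases j <;>
      simp [Matrix.mul_apply, Fin.sum_univ_succ] <;> grind
  obtain ⟨p1, r1⟩ := psd_rank_of_factor _ _ _ e1 e2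
  obtain ⟨p2, r2⟩ := psd_rank_of_factor _ _ _ e3 e4
  exact ⟨p1, p2, r1, r2⟩
end

section
/- Let λ > 0, λ ≠ 1, μ = 1/λ, and in ℂ³ take ξ = e₁, η = e₂, ζ = e₁. Let X be the 9×9 matrix with nonzero entries X₁₁ = X₅₅ = X₉₉ = X₁₅ = X₅₁ = X₁₉ = X₉₁ = X₅₉ = X₉₅ = 1; X₂₂ = X₆₆ = X₇₇ = λ²; X₃₃ = X₄₄ = X₈₈ = μ²; X₃₇ = X₇₃ = 1 (all other entries 0). Then X and its partial transpose X^τ are positive semidefinite, rank X = 6, and rank X^τ = 5. -/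
open Matrix Complex
open scoped ComplexOrder

/-- The matrix `X(e₁, e₂, e₁; λ)` (with `μ = 1/λ`): here `⟨ζ,ξ⟩ = ⟨ξ,ζ⟩ = 1` and the
other off-diagonal inner products vanish. -/
def X12 (lam mu : ℝ) : Matrix (Fin 9) (Fin 9) ℂ :=
  !![1, 0, 0, 0, 1, 0, 0, 0, 1;
     0, (lam : ℂ)^2, 0, 0, 0, 0, 0, 0, 0;
     0, 0, (mu : ℂ)^2, 0, 0, 0, 1, 0, 0;
     0, 0, 0, (mu : ℂ)^2, 0, 0, 0, 0, 0;
     1, 0, 0, 0, 1, 0, 0, 0, 1;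
     0, 0, 0, 0, 0, (lam : ℂ)^2, 0, 0, 0;
     0, 0, 1, 0, 0, 0, (lam : ℂ)^2, 0, 0;
     0, 0, 0, 0, 0, 0, 0, (mu : ℂ)^2, 0;
     1, 0, 0, 0, 1, 0, 0, 0, 1]

lemma gram_aux {k : ℕ} (X : Matrix (Fin 9) (Fin 9) ℂ) (B : Matrix (Fin k) (Fin 9) ℂ)
    (C : Matrix (Fin 9) (Fin k) ℂ) (h : X = Bᴴ * B) (hC : B * C = 1) :
    X.PosSemidef ∧ X.rank = k := by
  subst h
  refine ⟨Matrix.posSemidef_conjTranspose_mul_self B, ?_⟩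
  rw [Matrix.rank_conjTranspose_mul_self]
  apply le_antisymm
  · simpa using Matrix.rank_le_card_height B
  · have := Matrix.rank_mul_le_left B C
    rw [hC, Matrix.rank_one] at this
    simpa using this

/-- Gram factor of `X`. -/
def facX (l m : ℂ) : Matrix (Fin 6) (Fin 9) ℂ :=
  !![1, 0, 0, 0, 1, 0, 0, 0, 1;
     0, l, 0, 0, 0, 0, 0, 0, 0;
     0, 0, m, 0, 0, 0, l, 0, 0;
     0, 0, 0, m, 0, 0, 0, 0, 0;
     0, 0, 0, 0, 0, l, 0, 0, 0;
     0, 0, 0, 0, 0, 0, 0, m, 0]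

/-- Right inverse of `facX`. -/
def invX (l m : ℂ) : Matrix (Fin 9) (Fin 6) ℂ :=
  !![1, 0, 0, 0, 0, 0;
     0, m, 0, 0, 0, 0;
     0, 0, l, 0, 0, 0;
     0, 0, 0, l, 0, 0;
     0, 0, 0, 0, 0, 0;
     0, 0, 0, 0, m, 0;
     0, 0, 0, 0, 0, 0;
     0, 0, 0, 0, 0, l;
     0, 0, 0, 0, 0, 0]

/-- Gram factor of the partial transpose. -/
def facY (l m : ℂ) : Matrix (Fin 5) (Fin 9) ℂ :=
  !![1, 0, 0, 0, 0, 0, 0, 0, 1;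
     0, l, 0, m, 0, 0, 0, 0, 0;
     0, 0, m, 0, 0, 0, l, 0, 0;
     0, 0, 0, 0, 1, 0, 0, 0, 0;
     0, 0, 0, 0, 0, l, 0, m, 0]

/-- Right inverse of `facY`. -/
def invY (l m : ℂ) : Matrix (Fin 9) (Fin 5) ℂ :=
  !![1, 0, 0, 0, 0;
     0, m, 0, 0, 0;
     0, 0, l, 0, 0;
     0, 0, 0, 0, 0;
     0, 0, 0, 1, 0;
     0, 0, 0, 0, m;
     0, 0, 0, 0, 0;
     0, 0, 0, 0, 0;
     0, 0, 0, 0, 0]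

/-- The partial transpose of `X12`, written out. -/
def Y12 (l m : ℂ) : Matrix (Fin 9) (Fin 9) ℂ :=
  !![1, 0, 0, 0, 0, 0, 0, 0, 1;
     0, l^2, 0, 1, 0, 0, 0, 0, 0;
     0, 0, m^2, 0, 0, 0, 1, 0, 0;
     0, 1, 0, m^2, 0, 0, 0, 0, 0;
     0, 0, 0, 0, 1, 0, 0, 0, 0;
     0, 0, 0, 0, 0, l^2, 0, 1, 0;
     0, 0, 1, 0, 0, 0, l^2, 0, 0;
     0, 0, 0, 0, 0, 1, 0, m^2, 0;
     1, 0, 0, 0, 0, 0, 0, 0, 1]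

set_option maxHeartbeats 2000000 in
lemma pt9_gen (x z a b : ℂ) : pt9
  !![x, z, z, z, x, z, z, z, x;
     z, a, z, z, z, z, z, z, z;
     z, z, b, z, z, z, x, z, z;
     z, z, z, b, z, z, z, z, z;
     x, z, z, z, x, z, z, z, x;
     z, z, z, z, z, a, z, z, z;
     z, z, x, z, z, z, a, z, z;
     z, z, z, z, z, z, z, b, z;
     x, z, z, z, x, z, z, z, x] =
  !![x, z, z, z, z, z, z, z, x;
     z, a, z, x, z, z, z, z, z;
     z, z, b, z, z, z, x, z, z;
     z, x, z, b, z, z, z, z, z;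
     z, z, z, z, x, z, z, z, z;
     z, z, z, z, z, a, z, x, z;
     z, z, x, z, z, z, a, z, z;
     z, z, z, z, z, x, z, b, z;
     x, z, z, z, z, z, z, z, x] := by
  ext i j
  rw [pt9, Matrix.of_apply]
  fin_cases i <;> fin_cases j <;>
    simp only [Fin.reduceFinMk, Fin.zero_eta, Fin.mk_one, Nat.reduceDiv, Nat.reduceMod, Nat.reduceMul,
      Nat.reduceAdd, Nat.zero_div, Nat.zero_mod, Nat.mul_zero, Nat.zero_add, Nat.add_zero, Fin.isValue,
      Nat.mul_one, Nat.one_mod] <;> (simp only [Matrix.of_apply, Matrix.cons_val])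

lemma pt9_eq (lam mu : ℝ) : pt9 (X12 lam mu) = Y12 lam mu :=
  pt9_gen 1 0 ((lam : ℂ)^2) ((mu : ℂ)^2)

lemma facX_inv (l m : ℂ) (hlm : l * m = 1) (hml : m * l = 1) : facX l m * invX l m = 1 := by
  ext i j
  fin_cases i <;> fin_cases j <;>
    simp [facX, invX, Matrix.mul_apply, Fin.sum_univ_succ, hlm, hml]

lemma facY_inv (l m : ℂ) (hlm : l * m = 1) (hml : m * l = 1) : facY l m * invY l m = 1 := by
  ext i j
  fin_cases i <;> fin_cases j <;>
    simp [facY, invY, Matrix.mul_apply, Fin.sum_univ_succ, hlm, hml]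

set_option maxHeartbeats 1000000 in
lemma facX_gram (lam mu : ℝ) (hlm : (lam : ℂ) * mu = 1) (hml : (mu : ℂ) * lam = 1) :
    X12 lam mu = (facX lam mu)ᴴ * facX lam mu := by
  ext i j
  rw [Matrix.mul_apply, Fin.sum_univ_six]
  simp only [Matrix.conjTranspose_apply]
  fin_cases i <;> fin_cases j <;> simp [X12, facX, hlm, hml, sq]

set_option maxHeartbeats 1000000 in
lemma facY_gram (lam mu : ℝ) (hlm : (lam : ℂ) * mu = 1) (hml : (mu : ℂ) * lam = 1) :
    Y12 lam mu = (facY lam mu)ᴴ * facY lam mu := by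
  ext i j
  rw [Matrix.mul_apply, Fin.sum_univ_five]
  simp only [Matrix.conjTranspose_apply]
  fin_cases i <;> fin_cases j <;> simp [Y12, facY, hlm, hml, sq]

/-- With `ξ = e₁, η = e₂, ζ = e₁`: `X` is PPT with `rank X = 6` and `rank X^τ = 5`
(a `(6,5)` edge state). -/
theorem X12_ppt_rank (lam mu : ℝ) (h0 : 0 < lam) (h1 : lam ≠ 1) (hmu : mu = 1 / lam) :
    (X12 lam mu).PosSemidef ∧ (pt9 (X12 lam mu)).PosSemidef ∧
      (X12 lam mu).rank = 6 ∧ (pt9 (X12 lam mu)).rank = 5 := by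
  have hr : lam * mu = 1 := by rw [hmu]; field_simp
  have hlm : (lam : ℂ) * (mu : ℂ) = 1 := by exact_mod_cast hr
  have hml : (mu : ℂ) * (lam : ℂ) = 1 := by rw [mul_comm]; exact hlm
  have hX := gram_aux (X12 lam mu) (facX lam mu) (invX lam mu)
    (facX_gram lam mu hlm hml) (facX_inv _ _ hlm hml)
  have hY := gram_aux (pt9 (X12 lam mu)) (facY lam mu) (invY lam mu)
    ((pt9_eq lam mu).trans (facY_gram lam mu hlm hml)) (facY_inv _ _ hlm hml)
  exact ⟨hX.1, hY.1, hX.2, hY.2⟩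
end

section
/- Let t > 1 be real, λ > 0, λ ≠ 1, μ = 1/λ. Define the 9×9 real symmetric matrix X_t whose nonzero entries (rows and columns indexed 1,…,9) are: X₁₁ = X₅₅ = t; X₉₉ = 2/(t+1); X₁₅ = X₅₁ = X₁₉ = X₉₁ = X₅₉ = X₉₅ = 1; X₂₂ = X₆₆ = X₇₇ = λ²; X₃₃ = X₄₄ = X₈₈ = μ²; X₃₇ = X₇₃ = X₆₈ = X₈₆ = √(t/(t+1)); all other entries are 0. Then X_t and its partial transpose X_t^τ are positive semidefinite, rank X_t = 8, and rank X_t^τ = 5. -/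
open Matrix Complex
open scoped ComplexOrder

/-- The `9 × 9` matrix `X_t` (with parameters `t > 1`, `λ > 0`, `μ = 1/λ`). -/
noncomputable def Xt (t lam mu : ℝ) : Matrix (Fin 9) (Fin 9) ℂ :=
  !![(t : ℂ), 0, 0, 0, 1, 0, 0, 0, 1;
     0, (lam : ℂ)^2, 0, 0, 0, 0, 0, 0, 0;
     0, 0, (mu : ℂ)^2, 0, 0, 0, ((Real.sqrt (t / (t + 1)) : ℝ) : ℂ), 0, 0;
     0, 0, 0, (mu : ℂ)^2, 0, 0, 0, 0, 0;
     1, 0, 0, 0, (t : ℂ), 0, 0, 0, 1;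
     0, 0, 0, 0, 0, (lam : ℂ)^2, 0, ((Real.sqrt (t / (t + 1)) : ℝ) : ℂ), 0;
     0, 0, ((Real.sqrt (t / (t + 1)) : ℝ) : ℂ), 0, 0, 0, (lam : ℂ)^2, 0, 0;
     0, 0, 0, 0, 0, ((Real.sqrt (t / (t + 1)) : ℝ) : ℂ), 0, (mu : ℂ)^2, 0;
     1, 0, 0, 0, 1, 0, 0, 0, ((2 / (t + 1) : ℝ) : ℂ)]

lemma psd_rank_of_factor_s15 {n m : ℕ} (M : Matrix (Fin n) (Fin n) ℝ) (B : Matrix (Fin m) (Fin n) ℝ)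
    (R : Matrix (Fin n) (Fin m) ℝ) (hM : M = Bᵀ * B) (hR : B * R = 1) :
    (M.map Complex.ofRealHom).PosSemidef ∧ (M.map Complex.ofRealHom).rank = m := by
  subst hM
  have hT : (B.map Complex.ofRealHom)ᴴ = Bᵀ.map Complex.ofRealHom := by
    ext i j
    simp [Matrix.conjTranspose_apply]
  have hR' : B.map Complex.ofRealHom * R.map Complex.ofRealHom = 1 := by
    rw [← Matrix.map_mul, hR]
    exact Matrix.map_one _ (map_zero _) (map_one _)
  rw [Matrix.map_mul, ← hT]
  refine ⟨posSemidef_conjTranspose_mul_self _, ?_⟩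
  rw [rank_conjTranspose_mul_self]
  apply le_antisymm
  · simpa using (B.map Complex.ofRealHom).rank_le_height
  · have h := rank_mul_le_left (B.map Complex.ofRealHom) (R.map Complex.ofRealHom)
    rw [hR', rank_one] at h
    simpa using h

section factors

variable {K : Type*} [Field K]

/-- The shape of `X_t` over a field. -/
def genX (t s u l m : K) : Matrix (Fin 9) (Fin 9) K :=
  !![t, 0, 0, 0, 1, 0, 0, 0, 1;
     0, l ^ 2, 0, 0, 0, 0, 0, 0, 0;
     0, 0, m ^ 2, 0, 0, 0, s, 0, 0;
     0, 0, 0, m ^ 2, 0, 0, 0, 0, 0;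
     1, 0, 0, 0, t, 0, 0, 0, 1;
     0, 0, 0, 0, 0, l ^ 2, 0, s, 0;
     0, 0, s, 0, 0, 0, l ^ 2, 0, 0;
     0, 0, 0, 0, 0, s, 0, m ^ 2, 0;
     1, 0, 0, 0, 1, 0, 0, 0, u]

/-- The shape of the partial transpose of `X_t` over a field. -/
def genY (t s u l m : K) : Matrix (Fin 9) (Fin 9) K :=
  !![t, 0, 0, 0, 0, 0, 0, 0, s;
     0, l ^ 2, 0, 1, 0, 0, 0, 0, 0;
     0, 0, m ^ 2, 0, 0, 0, 1, 0, 0;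
     0, 1, 0, m ^ 2, 0, 0, 0, 0, 0;
     0, 0, 0, 0, t, 0, 0, 0, s;
     0, 0, 0, 0, 0, l ^ 2, 0, 1, 0;
     0, 0, 1, 0, 0, 0, l ^ 2, 0, 0;
     0, 0, 0, 0, 0, 1, 0, m ^ 2, 0;
     s, 0, 0, 0, s, 0, 0, 0, u]

/-- Factor of `X_t`. -/
def facB (a a' b c s l m : K) : Matrix (Fin 8) (Fin 9) K :=
  !![a, 0, 0, 0, a, 0, 0, 0, a';
     b, 0, 0, 0, -b, 0, 0, 0, 0;
     0, 0, s * m, 0, 0, 0, l, 0, 0;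
     0, 0, c * m, 0, 0, 0, 0, 0, 0;
     0, 0, 0, 0, 0, l, 0, s * m, 0;
     0, 0, 0, 0, 0, 0, 0, c * m, 0;
     0, l, 0, 0, 0, 0, 0, 0, 0;
     0, 0, 0, m, 0, 0, 0, 0, 0]

/-- Right inverse of `facB` (`p = 1/(2a)`, `q = 1/(2b)`, `v = l/c`, `w = - s m / c`). -/
def facR (p q v w l m : K) : Matrix (Fin 9) (Fin 8) K :=
  !![p, q, 0, 0, 0, 0, 0, 0;
     0, 0, 0, 0, 0, 0, m, 0;
     0, 0, 0, v, 0, 0, 0, 0;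
     0, 0, 0, 0, 0, 0, 0, l;
     p, -q, 0, 0, 0, 0, 0, 0;
     0, 0, 0, 0, m, w, 0, 0;
     0, 0, m, w, 0, 0, 0, 0;
     0, 0, 0, 0, 0, v, 0, 0;
     0, 0, 0, 0, 0, 0, 0, 0]

/-- Factor of the partial transpose of `X_t`. -/
def facC (r c l m : K) : Matrix (Fin 5) (Fin 9) K :=
  !![r, 0, 0, 0, 0, 0, 0, 0, c;
     0, 0, 0, 0, r, 0, 0, 0, c;
     0, l, 0, m, 0, 0, 0, 0, 0;
     0, 0, m, 0, 0, 0, l, 0, 0;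
     0, 0, 0, 0, 0, l, 0, m, 0]

/-- Right inverse of `facC`. -/
def facS (r' l m : K) : Matrix (Fin 9) (Fin 5) K :=
  !![r', 0, 0, 0, 0;
     0, 0, m, 0, 0;
     0, 0, 0, l, 0;
     0, 0, 0, 0, 0;
     0, r', 0, 0, 0;
     0, 0, 0, 0, m;
     0, 0, 0, 0, 0;
     0, 0, 0, 0, 0;
     0, 0, 0, 0, 0]

set_option maxHeartbeats 4000000 in
lemma genX_eq (t u a a' b c s l m : K) (h1 : t = a * a + b * b) (h2 : a * a - b * b = 1)
    (h3 : a * a' = 1) (h4 : s * s + c * c = 1) (h5 : l * m = 1) (h6 : u = a' * a') :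
    genX t s u l m = (facB a a' b c s l m)ᵀ * facB a a' b c s l m := by
  ext i j
  fin_cases i <;> fin_cases j <;>
    simp [genX, facB, Matrix.mul_apply, Fin.sum_univ_succ] <;>
    first
    | linear_combination h1
    | linear_combination -h2
    | linear_combination -h3
    | linear_combination h6
    | linear_combination -m ^ 2 * h4
    | linear_combination -s * h5
    | ring1

set_option maxHeartbeats 4000000 in
lemma facB_mul (a a' b c s l m p q v w : K) (h1 : a * p + a * p = 1) (h2 : b * q + b * q = 1)
    (h3 : l * m = 1) (h4 : c * m * v = 1) (h5 : s * m * v + l * w = 0) :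
    facB a a' b c s l m * facR p q v w l m = 1 := by
  ext i j
  fin_cases i <;> fin_cases j <;>
    simp [facB, facR, Matrix.mul_apply, Fin.sum_univ_succ] <;>
    first
    | linear_combination h1
    | linear_combination h2
    | linear_combination h3
    | linear_combination h4
    | linear_combination h5

set_option maxHeartbeats 4000000 in
lemma genY_eq (t u r c s l m : K) (h1 : t = r * r) (h2 : s = r * c) (h5 : l * m = 1)
    (h6 : u = c * c + c * c) :
    genY t s u l m = (facC r c l m)ᵀ * facC r c l m := by
  ext i j
  fin_cases i <;> fin_cases j <;>
    simp [genY, facC, Matrix.mul_apply, Fin.sum_univ_succ] <;>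
    first
    | linear_combination h1
    | linear_combination h2
    | linear_combination -h5
    | linear_combination h6
    | ring1

set_option maxHeartbeats 4000000 in
lemma facC_mul (r r' c l m : K) (h1 : r * r' = 1) (h3 : l * m = 1) :
    facC r c l m * facS r' l m = 1 := by
  ext i j
  fin_cases i <;> fin_cases j <;>
    simp [facC, facS, Matrix.mul_apply, Fin.sum_univ_succ] <;>
    first
    | linear_combination h1
    | linear_combination h3

end factors

set_option maxHeartbeats 4000000 in
lemma Xt_eq (t l m : ℝ) :
    Xt t l m = (genX t (Real.sqrt (t / (t + 1))) (2 / (t + 1)) l m).map Complex.ofRealHom := by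
  rw [Xt]
  generalize Real.sqrt (t / (t + 1)) = s
  generalize 2 / (t + 1) = u
  ext i j
  fin_cases i <;> fin_cases j <;> simp [genX]

lemma pt9_lit (X : Matrix (Fin 9) (Fin 9) ℂ) :
    pt9 X =
    !![X 0 0, X 0 1, X 0 2, X 3 0, X 3 1, X 3 2, X 6 0, X 6 1, X 6 2;
       X 1 0, X 1 1, X 1 2, X 4 0, X 4 1, X 4 2, X 7 0, X 7 1, X 7 2;
       X 2 0, X 2 1, X 2 2, X 5 0, X 5 1, X 5 2, X 8 0, X 8 1, X 8 2;
       X 0 3, X 0 4, X 0 5, X 3 3, X 3 4, X 3 5, X 6 3, X 6 4, X 6 5;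
       X 1 3, X 1 4, X 1 5, X 4 3, X 4 4, X 4 5, X 7 3, X 7 4, X 7 5;
       X 2 3, X 2 4, X 2 5, X 5 3, X 5 4, X 5 5, X 8 3, X 8 4, X 8 5;
       X 0 6, X 0 7, X 0 8, X 3 6, X 3 7, X 3 8, X 6 6, X 6 7, X 6 8;
       X 1 6, X 1 7, X 1 8, X 4 6, X 4 7, X 4 8, X 7 6, X 7 7, X 7 8;
       X 2 6, X 2 7, X 2 8, X 5 6, X 5 7, X 5 8, X 8 6, X 8 7, X 8 8] := by
  ext i j
  fin_cases i <;> fin_cases j <;> rfl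

set_option maxHeartbeats 4000000 in
lemma pt9_Xt_eq (t l m : ℝ) :
    pt9 (Xt t l m) =
      (genY t (Real.sqrt (t / (t + 1))) (2 / (t + 1)) l m).map Complex.ofRealHom := by
  rw [pt9_lit, Xt_eq]
  generalize Real.sqrt (t / (t + 1)) = s
  generalize 2 / (t + 1) = u
  ext i j
  fin_cases i <;> fin_cases j <;> simp [genX, genY]

/-- `X_t` is PPT with `rank X_t = 8` and `rank X_t^τ = 5` (an `(8,5)` edge state). -/
theorem Xt_ppt_rank (t lam mu : ℝ) (ht : 1 < t) (hlam : 0 < lam) (h1 : lam ≠ 1)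
    (hmu : mu = 1 / lam) :
    (Xt t lam mu).PosSemidef ∧ (pt9 (Xt t lam mu)).PosSemidef ∧
      (Xt t lam mu).rank = 8 ∧ (pt9 (Xt t lam mu)).rank = 5 := by
  have hlm : lam * mu = 1 := by
    rw [hmu]; field_simp
  have hX := Xt_eq t lam mu
  have hY := pt9_Xt_eq t lam mu
  rw [hX] at *
  rw [hY]
  clear hX hY
  obtain ⟨s, hs⟩ : ∃ s, s = Real.sqrt (t / (t + 1)) := ⟨_, rfl⟩
  obtain ⟨a, ha⟩ : ∃ a, a = Real.sqrt ((t + 1) / 2) := ⟨_, rfl⟩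
  obtain ⟨b, hb⟩ : ∃ b, b = Real.sqrt ((t - 1) / 2) := ⟨_, rfl⟩
  obtain ⟨c, hc⟩ : ∃ c, c = Real.sqrt (1 / (t + 1)) := ⟨_, rfl⟩
  obtain ⟨r, hr⟩ : ∃ r, r = Real.sqrt t := ⟨_, rfl⟩
  rw [← hs]
  have hs2 : s * s = t / (t + 1) := by rw [hs, Real.mul_self_sqrt (by positivity)]
  have ha2 : a * a = (t + 1) / 2 := by rw [ha, Real.mul_self_sqrt (by positivity)]
  have hb2 : b * b = (t - 1) / 2 := by rw [hb, Real.mul_self_sqrt (by linarith)]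
  have hc2 : c * c = 1 / (t + 1) := by rw [hc, Real.mul_self_sqrt (by positivity)]
  have hr2 : r * r = t := by rw [hr, Real.mul_self_sqrt (by positivity)]
  have hrc : s = r * c := by
    rw [hr, hc, hs, ← Real.sqrt_mul (by positivity)]; congr 1; ring
  have ha0 : a ≠ 0 := by
    have : 0 < a := by rw [ha]; apply Real.sqrt_pos.2; positivity
    exact this.ne'
  have hb0 : b ≠ 0 := by
    have : 0 < b := by rw [hb]; apply Real.sqrt_pos.2; linarith
    exact this.ne'
  have hc0 : c ≠ 0 := by
    have : 0 < c := by rw [hc]; apply Real.sqrt_pos.2; positivity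
    exact this.ne'
  have hr0 : r ≠ 0 := by
    have : 0 < r := by rw [hr]; apply Real.sqrt_pos.2; positivity
    exact this.ne'
  have hX := genX_eq t (2 / (t + 1)) a a⁻¹ b c s lam mu (by rw [ha2, hb2]; ring)
    (by rw [ha2, hb2]; ring) (mul_inv_cancel₀ ha0) (by rw [hs2, hc2]; field_simp) hlm
    (by rw [← mul_inv, ha2, inv_div])
  have hR := facB_mul a a⁻¹ b c s lam mu (2 * a)⁻¹ (2 * b)⁻¹ (lam / c) (-(s * mu / c))
    (by field_simp; norm_num) (by field_simp; norm_num) hlm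
    (by field_simp; linarith) (by field_simp; ring)
  have hY := genY_eq t (2 / (t + 1)) r c s lam mu hr2.symm hrc hlm (by rw [hc2]; ring)
  have hS := facC_mul r r⁻¹ c lam mu (mul_inv_cancel₀ hr0) hlm
  obtain ⟨p1, q1⟩ := psd_rank_of_factor_s15 _ _ _ hX hR
  obtain ⟨p2, q2⟩ := psd_rank_of_factor_s15 _ _ _ hY hS
  exact ⟨p1, p2, q1, q2⟩
end
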